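/- For vectors μ, ν ∈ ℝ^d, s > 0, and any order α > 1, the Rényi divergence of order α between the product Gaussian measures N(μ, s²I) = ⊗_{i=1}^d N(μ_i, s²) and N(ν, s²I) = ⊗_{i=1}^d N(ν_i, s²) on ℝ^d equals α‖μ − ν‖²/(2s²), where ‖·‖ is the Euclidean norm. -/

import Mathlib

open Real MeasureTheory ProbabilityTheory

/-- The Rényi divergence of order `α` between measures `P` and `Q`:
`D_α(P‖Q) = (α - 1)⁻¹ · log ∫ (dP/dQ)^α dQ`. -/
noncomputable def renyiDiv {Ω : Type*} [MeasurableSpace Ω]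
    (P Q : Measure Ω) (α : ℝ) : ℝ :=
  (α - 1)⁻¹ * Real.log (∫ x, (P.rnDeriv Q x).toReal ^ α ∂Q)

/-!
Tilting `N(n, v)` by the linear function `x ↦ t x` only shifts the mean, to `n + v t`. Hence
`⊗ᵢ N(μᵢ, vᵢ)` is the exponential tilt of `⊗ᵢ N(νᵢ, vᵢ)` by `f x = ∑ᵢ tᵢ xᵢ` with
`tᵢ = (μᵢ - νᵢ) / vᵢ`. The Rényi divergence of a tilt from its base measure depends only on the
cumulant generating function `K` of `f`, as `(K(α) - α K(1)) / (α - 1)`. Here `K` is quadratic: its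
linear part cancels, and its quadratic part `a² ∑ᵢ vᵢ tᵢ² / 2` contributes
`(α² - α) / (α - 1) = α` times `∑ᵢ vᵢ tᵢ² / 2`.
-/

open scoped NNReal

lemma renyiDiv_tilted_self {Ω : Type*} [MeasurableSpace Ω] {Q : Measure Ω} [SigmaFinite Q]
    [NeZero Q] {f : Ω → ℝ} {α : ℝ} (hf : Integrable (fun x ↦ exp (f x)) Q)
    (hαf : Integrable (fun x ↦ exp (α * f x)) Q) :
    renyiDiv (Q.tilted f) Q α = (α - 1)⁻¹ * (cgf f Q α - α * cgf f Q 1) := by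
  have mgf_one_pos : 0 < mgf f Q 1 := by simpa only [mgf, one_mul] using integral_exp_pos hf
  have rnDeriv_rpow : (fun x ↦ ((Q.tilted f).rnDeriv Q x).toReal ^ α) =ᵐ[Q]
      fun x ↦ exp (α * f x) / mgf f Q 1 ^ α := by
    filter_upwards [rnDeriv_tilted_left_self (aemeasurable_of_aemeasurable_exp hf.aemeasurable)]
      with x hx
    rw [hx, ENNReal.toReal_ofReal (by positivity), div_rpow (exp_pos _).le (by positivity),
      ← exp_mul, mul_comm (f x)]
    simp only [mgf, one_mul]
  rw [renyiDiv, integral_congr_ae rnDeriv_rpow, integral_div,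
    log_div (integral_exp_pos hαf).ne' (rpow_pos_of_pos mgf_one_pos α).ne', log_rpow mgf_one_pos]
  rfl

lemma pi_tilted {ι : Type*} [Fintype ι] {E : ι → Type*} [∀ i, MeasurableSpace (E i)]
    (Q : ∀ i, Measure (E i)) [∀ i, SigmaFinite (Q i)] (f : ∀ i, E i → ℝ) :
    Measure.pi (fun i ↦ (Q i).tilted (f i)) = (Measure.pi Q).tilted (fun x ↦ ∑ i, f i (x i)) := by
  refine Measure.pi_eq fun s hs ↦ ?_
  simp_rw [tilted_apply_eq_ofReal_integral' _ (MeasurableSet.univ_pi hs),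
    tilted_apply_eq_ofReal_integral' _ (hs _), exp_sum,
    integral_fintype_prod_eq_prod (fun i y ↦ exp (f i y)), ← Finset.prod_div_distrib,
    Measure.restrict_pi_pi]
  rw [integral_fintype_prod_eq_prod (fun i y ↦ exp (f i y) / ∫ z, exp (f i z) ∂Q i),
    ENNReal.ofReal_prod_of_nonneg fun i _ ↦ integral_nonneg fun y ↦ by positivity]

section Gaussian

lemma gaussianReal_tilted_mul (n t : ℝ) (v : ℝ≥0) :
    (gaussianReal n v).tilted (fun x ↦ t * x) = gaussianReal (n + v * t) v := by
  rcases eq_or_ne v 0 with rfl | hv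
  · rw [gaussianReal_zero_var, tilted_congr (g := fun _ ↦ t * n) (ae_eq_dirac _), tilted_const,
      NNReal.coe_zero, zero_mul, add_zero, gaussianReal_zero_var]
  have integral_exp : ∫ x, exp (t * x) ∂gaussianReal n v = exp (n * t + v * t ^ 2 / 2) :=
    congrFun mgf_fun_id_gaussianReal t
  have density_mul (x : ℝ) : gaussianPDFReal n v x * (exp (t * x) / exp (n * t + v * t ^ 2 / 2)) =
      gaussianPDFReal (n + v * t) v x := by
    rw [gaussianPDFReal, gaussianPDFReal, mul_assoc, ← exp_sub, ← exp_add]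
    congr 2
    field_simp
    ring
  rw [Measure.tilted, integral_exp, gaussianReal_of_var_ne_zero _ hv,
    gaussianReal_of_var_ne_zero _ hv, ← withDensity_mul _ (by fun_prop) (by fun_prop)]
  congr 1 with x
  rw [Pi.mul_apply, gaussianPDF, gaussianPDF, ← density_mul,
    ENNReal.ofReal_mul (gaussianPDFReal_nonneg _ _ _)]

variable {ι : Type*} [Fintype ι]

lemma mgf_sum_mul_pi_gaussianReal (n t : ι → ℝ) (v : ι → ℝ≥0) (a : ℝ) :
    mgf (fun x ↦ ∑ i, t i * x i) (Measure.pi fun i ↦ gaussianReal (n i) (v i)) a =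
      exp (∑ i, (n i * (t i * a) + v i * (t i * a) ^ 2 / 2)) := by
  simp_rw [mgf, Finset.mul_sum, exp_sum]
  rw [integral_fintype_prod_eq_prod (fun i y ↦ exp (a * (t i * y)))]
  refine Finset.prod_congr rfl fun i _ ↦ ?_
  rw [← mgf, mgf_const_mul, mgf_fun_id_gaussianReal]

lemma integrable_exp_mul_sum_mul_pi_gaussianReal (n t : ι → ℝ) (v : ι → ℝ≥0) (a : ℝ) :
    Integrable (fun x ↦ exp (a * ∑ i, t i * x i))
      (Measure.pi fun i ↦ gaussianReal (n i) (v i)) := by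
  rw [← mgf_pos_iff, mgf_sum_mul_pi_gaussianReal]
  exact exp_pos _

lemma renyiDiv_pi_gaussianReal_add_mul (n t : ι → ℝ) (v : ι → ℝ≥0) {α : ℝ} (hα : α ≠ 1) :
    renyiDiv (Measure.pi fun i ↦ gaussianReal (n i + v i * t i) (v i))
        (Measure.pi fun i ↦ gaussianReal (n i) (v i)) α =
      α * ∑ i, v i * t i ^ 2 / 2 := by
  have integrable_exp := integrable_exp_mul_sum_mul_pi_gaussianReal n t v
  have cgf_eq (a : ℝ) :
      cgf (fun x ↦ ∑ i, t i * x i) (Measure.pi fun i ↦ gaussianReal (n i) (v i)) a =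
        a * ∑ i, n i * t i + a ^ 2 * ∑ i, v i * t i ^ 2 / 2 := by
    rw [cgf, mgf_sum_mul_pi_gaussianReal, log_exp, Finset.mul_sum, Finset.mul_sum,
      ← Finset.sum_add_distrib]
    exact Finset.sum_congr rfl fun i _ ↦ by ring
  simp_rw [← gaussianReal_tilted_mul, pi_tilted]
  rw [renyiDiv_tilted_self (by simpa only [one_mul] using integrable_exp 1) (integrable_exp α),
    cgf_eq, cgf_eq, inv_mul_eq_iff_eq_mul₀ (sub_ne_zero.mpr hα)]
  ring

theorem renyiDiv_pi_gaussian_general (μ ν : ι → ℝ) {v : ι → ℝ≥0} (hv : ∀ i, v i ≠ 0)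
    {α : ℝ} (hα : α ≠ 1) :
    renyiDiv (Measure.pi fun i ↦ gaussianReal (μ i) (v i))
        (Measure.pi fun i ↦ gaussianReal (ν i) (v i)) α =
      α * ∑ i, (μ i - ν i) ^ 2 / (2 * v i) := by
  have hv' (i : ι) : (v i : ℝ) ≠ 0 := NNReal.coe_ne_zero.mpr (hv i)
  have mean_eq (i : ι) : ν i + v i * ((μ i - ν i) / v i) = μ i := by
    rw [mul_div_cancel₀ _ (hv' i), add_sub_cancel]
  have quadratic_eq (i : ι) :
      v i * ((μ i - ν i) / v i) ^ 2 / 2 = (μ i - ν i) ^ 2 / (2 * v i) := by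
    have := hv' i
    field_simp
  simpa only [mean_eq, quadratic_eq] using
    renyiDiv_pi_gaussianReal_add_mul ν (fun i ↦ (μ i - ν i) / v i) v hα

end Gaussian

/-- The Rényi divergence of order `α > 1` between the spherical Gaussians
`N(μ, s²I) = ⊗ᵢ N(μᵢ, s²)` and `N(ν, s²I) = ⊗ᵢ N(νᵢ, s²)` on `ℝ^d` equals
`α ‖μ - ν‖² / (2 s²)` (Euclidean norm). -/
theorem renyiDiv_pi_gaussian (d : ℕ) (μ ν : Fin d → ℝ) (s α : ℝ)
    (hs : 0 < s) (hα : 1 < α) :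
    renyiDiv (Measure.pi fun i => gaussianReal (μ i) (Real.toNNReal (s ^ 2)))
        (Measure.pi fun i => gaussianReal (ν i) (Real.toNNReal (s ^ 2))) α =
      α * (∑ i, (μ i - ν i) ^ 2) / (2 * s ^ 2) := by
  rw [renyiDiv_pi_gaussian_general μ ν (fun _ ↦ (toNNReal_pos.mpr (pow_pos hs 2)).ne') hα.ne',
    coe_toNNReal _ (sq_nonneg s), mul_div_assoc, Finset.sum_div]
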